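/- The set of admissible polynomials, viewed as a subset of the real vector space of polynomials with real coefficients of degree at most g−1, has exactly 2^m path-connected components, namely the 2^m sets of admissible polynomials of fixed topological type s ∈ {+1, −1}^m (each of which is nonempty and convex). -/

import Mathlib

/-!
Write `R = λ r` with `r` real, monic and `r(0) > 0`. Then `Q_P = -λ (r - λ P²)`, and `r - λ P²` is
positive at `0`, so `P` is admissible iff `r - λ P² ≥ 0` on the whole real line (`admissible_iff`).

On the negative axis `r` is negative in the interiors of the gaps and nonnegative off the gaps.
Hence an admissible `P` has no zero inside a gap, it has exactly one type, and this type is given by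
its signs at the midpoints of the gaps (`hasType_iff_mid`). These signs are constant along paths of
admissible polynomials. For a fixed type the conditions on `P` are convex: for `λ ≥ 0` one has
`λ P² ≤ r`, a bound on a convex function of `P`, and in the gaps one has the linear inequalities
defining the type; elsewhere nothing is required (`convex_type`). So the sets of fixed type are the
path components, as soon as each of them is nonempty.

Nonemptiness (`nonempty_type`) comes from an explicit construction. Put `λ = -z²` and choose a
square root `±√(-E k)` of each `-E k`, compatibly with complex conjugation; this defines a real
polynomial `F(z)` of degree `2g` with `F(z) F(-z) = r(-z²)`. Splitting `F` into its even and odd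
parts, `F(z) = A(-z²) + z P(-z²)`, yields `r = A² + λ P²` with `deg P < g`, so `P` is admissible.
The choice of the square roots at the real branch points controls the signs of `F(z)` and `F(-z)`
on the gaps, hence the sign of `P(-z²) = (F(z) - F(-z)) / 2z`, and every sign vector occurs.
-/

open Polynomial

noncomputable section

/-- Branch point data for the real periodic Sine-Gordon spectral curve:
`E 0 = 0`, the points `E 1, …, E (2*g)` are pairwise distinct and distinct from `0`,
`E 1, …, E (2*m)` are real with `0 > E 1 > E 2 > … > E (2*m)`, and for `m < j ≤ g`
the branch points `E (2*j-1)`, `E (2*j)` are non-real complex conjugates. -/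
structure BranchData (g m : ℕ) : Type where
  E : ℕ → ℂ
  hg : 1 ≤ g
  hm : 1 ≤ m
  hmg : m ≤ g
  hE0 : E 0 = 0
  hinj : Set.InjOn E (Set.Iic (2 * g))
  hreal : ∀ k, 1 ≤ k → k ≤ 2 * m → (E k).im = 0
  hneg : ∀ k, 1 ≤ k → k ≤ 2 * m → (E k).re < 0
  hdec : ∀ k, 1 ≤ k → k + 1 ≤ 2 * m → (E (k + 1)).re < (E k).re
  hcomplex : ∀ j, m < j → j ≤ g → (E (2 * j - 1)).im ≠ 0
  hconj : ∀ j, m < j → j ≤ g → E (2 * j) = starRingEnd ℂ (E (2 * j - 1))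

/-- `R(λ) = ∏_{k=0}^{2g} (λ - E k)`, a monic polynomial of degree `2g+1`. -/
def Rpoly (g : ℕ) (E : ℕ → ℂ) : Polynomial ℂ :=
  ∏ k ∈ Finset.range (2 * g + 1), (X - C (E k))

/-- The restriction of `R` to the real line (real-valued thanks to the symmetry of the
branch points). -/
def Rre (g : ℕ) (E : ℕ → ℂ) (x : ℝ) : ℝ := ((Rpoly g E).eval (x : ℂ)).re

/-- `Q_P(λ) = λ² P(λ)² - R(λ)`. -/
def Qpoly (g : ℕ) (E : ℕ → ℂ) (P : Polynomial ℝ) : Polynomial ℂ :=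
  X ^ 2 * (P.map (algebraMap ℝ ℂ)) ^ 2 - Rpoly g E

/-- A real polynomial `P` (of degree at most `g-1`) is admissible if every nonzero real
root of `Q_P(λ) = λ²P(λ)² - R(λ)` has even multiplicity. -/
def Admissible (g : ℕ) (E : ℕ → ℂ) (P : Polynomial ℝ) : Prop :=
  ∀ x : ℝ, x ≠ 0 → (Qpoly g E P).IsRoot (x : ℂ) →
    Even ((Qpoly g E P).rootMultiplicity (x : ℂ))

/-- A vector of signs `s k = ±1`, `k = 1, …, m`. -/
def SignVec (m : ℕ) (s : ℕ → ℝ) : Prop :=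
  ∀ k, 1 ≤ k → k ≤ m → s k = 1 ∨ s k = -1

/-- `P` has topological type `s = (s 1, …, s m)` if for each `k = 1, …, m` and every `λ`
in the gap `[E (2k), E (2k-1)]` one has `s k · P(λ) ≥ √(R(λ))/(-λ)`. -/
def HasType (g m : ℕ) (E : ℕ → ℂ) (P : Polynomial ℝ) (s : ℕ → ℝ) : Prop :=
  ∀ k, 1 ≤ k → k ≤ m → ∀ lam : ℝ, (E (2 * k)).re ≤ lam → lam ≤ (E (2 * k - 1)).re →
    Real.sqrt (Rre g E lam) / (-lam) ≤ s k * P.eval lam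

/-- The polynomial of degree at most `g-1` with coefficient vector `c : Fin g → ℝ`;
this identifies the real vector space of real polynomials of degree at most `g-1`
with the coefficient space `Fin g → ℝ` carrying its standard topology. -/
def polyOf (g : ℕ) (c : Fin g → ℝ) : Polynomial ℝ :=
  ∑ i : Fin g, Polynomial.C (c i) * Polynomial.X ^ (i : ℕ)

/-! ### Real polynomials whose real roots all have even multiplicity -/

/-- If all real roots have even multiplicity, a squared linear factor can be split off at each root
without changing this property; once no root is left, the intermediate value theorem applies. -/
lemma nonneg_of_even_rootMultiplicity (n : ℕ) : ∀ S : ℝ[X], S.natDegree ≤ n →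
    0 < S.eval 0 → (∀ x, Even (S.rootMultiplicity x)) → ∀ y, 0 ≤ S.eval y := by
  induction n using Nat.strong_induction_on with
  | _ n ih =>
    intro S hdeg h0 hev y
    have hS : S ≠ 0 := by rintro rfl; simp at h0
    by_cases hroot : ∃ x, S.IsRoot x
    · obtain ⟨x, hx⟩ := hroot
      have hpos : 0 < S.rootMultiplicity x := (rootMultiplicity_pos hS).2 hx
      have h2 : 2 ≤ S.rootMultiplicity x := by
        obtain ⟨k, hk⟩ := hev x
        omega
      obtain ⟨T, hT⟩ := (le_rootMultiplicity_iff hS).1 h2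
      have hT0 : T ≠ 0 := by rintro rfl; simp [hT] at hS
      have hne : ((X - C x) ^ 2 : ℝ[X]) ≠ 0 := pow_ne_zero _ (X_sub_C_ne_zero x)
      have hx0 : x ≠ 0 := by
        rintro rfl
        have : S.eval 0 = 0 := hx
        linarith
      have hd : S.natDegree = 2 + T.natDegree := by
        rw [hT, natDegree_mul hne hT0, natDegree_pow, natDegree_X_sub_C]
      have hT00 : 0 < T.eval 0 := by
        rw [hT] at h0
        simp only [eval_mul, eval_pow, eval_sub, eval_X, eval_C] at h0
        exact pos_of_mul_pos_right h0 (sq_nonneg _)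
      have hTe : ∀ a, Even (T.rootMultiplicity a) := by
        intro a
        have h := hev a
        rw [hT, rootMultiplicity_mul (mul_ne_zero hne hT0), sq,
          rootMultiplicity_mul (by rwa [← sq])] at h
        exact (Nat.even_add.1 h).1 (Even.add_self _)
      have := ih T.natDegree (by omega) T le_rfl hT00 hTe y
      rw [hT]
      simp only [eval_mul, eval_pow, eval_sub, eval_X, eval_C]
      positivity
    · by_contra! hy
      obtain ⟨z, -, hz⟩ := intermediate_value_uIcc (a := y) (b := 0)
        (f := fun t => S.eval t) S.continuous.continuousOn
        (show (0 : ℝ) ∈ _ from by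
          rw [Set.mem_uIcc]; exact Or.inl ⟨hy.le, h0.le⟩)
      exact hroot ⟨z, hz⟩

lemma even_rootMultiplicity_of_nonneg {S : ℝ[X]} (hS : S ≠ 0) (h : ∀ y, 0 ≤ S.eval y) (x : ℝ) :
    Even (S.rootMultiplicity x) := by
  by_contra hodd
  rw [Nat.not_even_iff_odd] at hodd
  obtain ⟨T, hT, hTx⟩ := exists_eq_pow_rootMultiplicity_mul_and_not_dvd S hS x
  set n := S.rootMultiplicity x
  rw [dvd_iff_isRoot] at hTx
  have hev : ∀ y, S.eval y = (y - x) ^ n * T.eval y := by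
    intro y
    conv_lhs => rw [hT]
    simp
  have hcont : Continuous fun t => T.eval t := T.continuous
  -- an odd power of `y - x` changes sign at `x`, so `T` is nonnegative to the right of `x`
  -- and nonpositive to the left of it
  have h1 : 0 ≤ T.eval x := by
    refine ge_of_tendsto (x := nhdsWithin x (Set.Ioi x)) (f := fun t => T.eval t)
      (hcont.continuousAt.tendsto.mono_left nhdsWithin_le_nhds) ?_
    filter_upwards [self_mem_nhdsWithin] with y hy
    have h2 := h y
    rw [hev] at h2
    exact nonneg_of_mul_nonneg_right h2 (pow_pos (sub_pos.2 hy) n)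
  have h2 : T.eval x ≤ 0 := by
    refine le_of_tendsto (x := nhdsWithin x (Set.Iio x)) (f := fun t => T.eval t)
      (hcont.continuousAt.tendsto.mono_left nhdsWithin_le_nhds) ?_
    filter_upwards [self_mem_nhdsWithin] with y hy
    have h3 := h y
    rw [hev] at h3
    have h4 : (y - x) ^ n < 0 := hodd.pow_neg (sub_neg.2 hy)
    by_contra! h5
    nlinarith [mul_neg_of_neg_of_pos h4 h5]
  exact hTx (le_antisymm h2 h1)

/-! ### The factorisation `R = λ r` over the reals -/

/-- The real quadratic `(λ - E (2j+1)) (λ - E (2j+2))`; its coefficients are written as real parts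
since the sum and the product of the two branch points are real. -/
def qf (E : ℕ → ℂ) (j : ℕ) : ℝ[X] :=
  X ^ 2 - C ((E (2 * j + 1) + E (2 * j + 2)).re) * X + C ((E (2 * j + 1) * E (2 * j + 2)).re)

/-- `r(λ) = R(λ) / λ` as a real polynomial. -/
def rr (g : ℕ) (E : ℕ → ℂ) : ℝ[X] := ∏ j ∈ Finset.range g, qf E j

section

variable {g m : ℕ}

lemma map_qf (D : BranchData g m) {j : ℕ} (hj : j < g) :
    (qf D.E j).map (algebraMap ℝ ℂ) = (X - C (D.E (2 * j + 1))) * (X - C (D.E (2 * j + 2))) := by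
  have key : (D.E (2 * j + 1) + D.E (2 * j + 2)).im = 0 ∧
      (D.E (2 * j + 1) * D.E (2 * j + 2)).im = 0 := by
    by_cases hm : j < m
    · have h1 := D.hreal (2 * j + 1) (by omega) (by omega)
      have h2 := D.hreal (2 * j + 2) (by omega) (by omega)
      simp [h1, h2]
    · have h := D.hconj (j + 1) (by omega) (by omega)
      have e1 : 2 * (j + 1) = 2 * j + 2 := by ring
      have e2 : 2 * j + 2 - 1 = 2 * j + 1 := by omega
      rw [e1, e2] at h
      rw [h]
      constructor
      · simp
      · simp [mul_comm]
  have c1 : (((D.E (2 * j + 1) + D.E (2 * j + 2)).re : ℝ) : ℂ)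
      = D.E (2 * j + 1) + D.E (2 * j + 2) :=
    Complex.ext (by simp) (by simp only [Complex.ofReal_im]; exact key.1.symm)
  have c2 : (((D.E (2 * j + 1) * D.E (2 * j + 2)).re : ℝ) : ℂ)
      = D.E (2 * j + 1) * D.E (2 * j + 2) :=
    Complex.ext (by simp only [Complex.ofReal_re])
      (by simp only [Complex.ofReal_im]; exact key.2.symm)
  simp only [qf, Polynomial.map_add, Polynomial.map_sub, Polynomial.map_mul, Polynomial.map_pow,
    map_X, map_C, Complex.coe_algebraMap, c1, c2]
  simp only [C_add, C_mul]
  ring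

lemma prod_range_two_mul (f : ℕ → ℂ[X]) (n : ℕ) :
    ∏ k ∈ Finset.range (2 * n), f k = ∏ j ∈ Finset.range n, (f (2 * j) * f (2 * j + 1)) := by
  induction n with
  | zero => simp
  | succ n ih =>
    rw [Finset.prod_range_succ, ← ih, Nat.mul_succ, Finset.prod_range_succ, Finset.prod_range_succ]
    ring

lemma Rpoly_eq (D : BranchData g m) :
    Rpoly g D.E = (X * rr g D.E).map (algebraMap ℝ ℂ) := by
  rw [Rpoly, Finset.prod_range_succ', D.hE0, prod_range_two_mul, rr, Polynomial.map_mul,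
    Polynomial.map_prod, map_X, C_0, sub_zero, mul_comm]
  congr 1
  refine Finset.prod_congr rfl fun j hj => ?_
  rw [map_qf D (Finset.mem_range.1 hj)]

lemma Rre_eq (D : BranchData g m) (x : ℝ) : Rre g D.E x = x * (rr g D.E).eval x := by
  have h : (x : ℂ) = algebraMap ℝ ℂ x := rfl
  rw [Rre, Rpoly_eq, h, eval_map_algebraMap, aeval_algebraMap_apply_eq_algebraMap_eval]
  simp

lemma Qpoly_eq (D : BranchData g m) (P : ℝ[X]) :
    Qpoly g D.E P = (-(X * (rr g D.E - X * P ^ 2))).map (algebraMap ℝ ℂ) := by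
  rw [Qpoly, Rpoly_eq]
  simp only [Polynomial.map_neg, Polynomial.map_mul, Polynomial.map_sub, Polynomial.map_pow, map_X]
  ring

lemma eval_qf_real (D : BranchData g m) {j : ℕ} (hj : j < m) (x : ℝ) :
    (qf D.E j).eval x = (x - (D.E (2 * j + 1)).re) * (x - (D.E (2 * j + 2)).re) := by
  have h1 := D.hreal (2 * j + 1) (by omega) (by omega)
  simp [qf, h1]
  ring

lemma E_conj (D : BranchData g m) {j : ℕ} (hm : m ≤ j) (hj : j < g) :
    D.E (2 * j + 2) = starRingEnd ℂ (D.E (2 * j + 1)) :=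
  D.hconj (j + 1) (by omega) (by omega)

lemma eval_qf_pos (D : BranchData g m) {j : ℕ} (hm : m ≤ j) (hj : j < g) (x : ℝ) :
    0 < (qf D.E j).eval x := by
  have h : (D.E (2 * j + 1)).im ≠ 0 := D.hcomplex (j + 1) (by omega) (by omega)
  have e : (qf D.E j).eval x = (x - (D.E (2 * j + 1)).re) ^ 2 + (D.E (2 * j + 1)).im ^ 2 := by
    simp [qf, E_conj D hm hj]
    ring
  rw [e]
  positivity

lemma E_anti (D : BranchData g m) {i j : ℕ} (hi : 1 ≤ i) (hij : i < j) (hj : j ≤ 2 * m) :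
    (D.E j).re < (D.E i).re := by
  induction j, hij using Nat.le_induction with
  | base => exact D.hdec i hi hj
  | succ n hn ih => exact (D.hdec n (by omega) hj).trans (ih (by omega))

lemma eval_rr (x : ℝ) (E : ℕ → ℂ) :
    (rr g E).eval x = ∏ j ∈ Finset.range g, (qf E j).eval x := by
  rw [rr, eval_prod]

lemma rr_zero_pos (D : BranchData g m) : 0 < (rr g D.E).eval 0 := by
  rw [eval_rr]
  refine Finset.prod_pos fun j hj => ?_
  by_cases hm : j < m
  · rw [eval_qf_real D hm]
    have h1 := D.hneg (2 * j + 1) (by omega) (by omega)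
    have h2 := D.hneg (2 * j + 2) (by omega) (by omega)
    nlinarith
  · exact eval_qf_pos D (by omega) (Finset.mem_range.1 hj) 0

/-- On the gap with (zero-based) index `k`, every quadratic factor other than the `k`-th is
positive, the gaps being disjoint. -/
lemma qf_pos_of_mem_gap (D : BranchData g m) {k : ℕ} (hk : k < m) {x : ℝ}
    (h1 : (D.E (2 * k + 2)).re ≤ x) (h2 : x ≤ (D.E (2 * k + 1)).re) {j : ℕ} (hj : j < g)
    (hjk : j ≠ k) : 0 < (qf D.E j).eval x := by
  by_cases hm : j < m
  · rw [eval_qf_real D hm]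
    have h3 := D.hdec (2 * j + 1) (by omega) (by omega)
    rcases lt_or_gt_of_ne hjk with h | h
    · have := E_anti D (i := 2 * j + 2) (j := 2 * k + 1) (by omega) (by omega) (by omega)
      exact mul_pos_of_neg_of_neg (by linarith) (by linarith)
    · have := E_anti D (i := 2 * k + 2) (j := 2 * j + 1) (by omega) (by omega) (by omega)
      exact mul_pos (by linarith) (by linarith)
  · exact eval_qf_pos D (by omega) hj x

lemma rr_nonpos_of_mem_gap (D : BranchData g m) {k : ℕ} (hk : k < m) {x : ℝ}
    (h1 : (D.E (2 * k + 2)).re ≤ x) (h2 : x ≤ (D.E (2 * k + 1)).re) :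
    (rr g D.E).eval x ≤ 0 := by
  have hmg := D.hmg
  rw [eval_rr, ← Finset.mul_prod_erase _ _ (Finset.mem_range.2 (by omega : k < g))]
  refine mul_nonpos_of_nonpos_of_nonneg ?_ (Finset.prod_nonneg fun j hj => ?_)
  · rw [eval_qf_real D hk]
    exact mul_nonpos_of_nonpos_of_nonneg (by linarith) (by linarith)
  · rw [Finset.mem_erase, Finset.mem_range] at hj
    exact (qf_pos_of_mem_gap D hk h1 h2 hj.2 hj.1).le

lemma rr_neg_of_mem_gap (D : BranchData g m) {k : ℕ} (hk : k < m) {x : ℝ}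
    (h1 : (D.E (2 * k + 2)).re < x) (h2 : x < (D.E (2 * k + 1)).re) :
    (rr g D.E).eval x < 0 := by
  have hmg := D.hmg
  rw [eval_rr, ← Finset.mul_prod_erase _ _ (Finset.mem_range.2 (by omega : k < g))]
  refine mul_neg_of_neg_of_pos ?_ (Finset.prod_pos fun j hj => ?_)
  · rw [eval_qf_real D hk]
    exact mul_neg_of_neg_of_pos (by linarith) (by linarith)
  · rw [Finset.mem_erase, Finset.mem_range] at hj
    exact qf_pos_of_mem_gap D hk h1.le h2.le hj.2 hj.1

lemma exists_gap_of_rr_neg (D : BranchData g m) {x : ℝ} (hx : (rr g D.E).eval x < 0) :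
    ∃ k < m, (D.E (2 * k + 2)).re ≤ x ∧ x ≤ (D.E (2 * k + 1)).re := by
  by_contra! h
  refine hx.not_ge ?_
  rw [eval_rr]
  refine Finset.prod_nonneg fun j hj => ?_
  by_cases hm : j < m
  · rw [eval_qf_real D hm]
    have h3 := D.hdec (2 * j + 1) (by omega) (by omega)
    by_cases h4 : (D.E (2 * j + 2)).re ≤ x
    · exact mul_nonneg (by linarith [h j hm h4]) (by linarith)
    · push Not at h4
      exact mul_nonneg_of_nonpos_of_nonpos (by linarith) (by linarith)
  · exact (eval_qf_pos D (by omega) (Finset.mem_range.1 hj) x).le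

/-! ### Admissibility and type as inequalities -/

/-- Since `Q_P = -λ (r - λ P²)` and `r(0) > 0`, admissibility says that `r - λ P²` has no sign
change on the real line. -/
lemma admissible_iff (D : BranchData g m) (P : ℝ[X]) :
    Admissible g D.E P ↔ ∀ x : ℝ, x * P.eval x ^ 2 ≤ (rr g D.E).eval x := by
  set S : ℝ[X] := rr g D.E - X * P ^ 2 with hSdef
  have hS0 : 0 < S.eval 0 := by simpa [hSdef] using rr_zero_pos D
  have hS : S ≠ 0 := by intro h; simp [h] at hS0
  have hXS : -(X * S) ≠ 0 := neg_ne_zero.2 (mul_ne_zero X_ne_zero hS)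
  have hmult : ∀ x : ℝ, x ≠ 0 →
      (Qpoly g D.E P).rootMultiplicity (x : ℂ) = S.rootMultiplicity x := by
    intro x hx
    have h : (x : ℂ) = algebraMap ℝ ℂ x := rfl
    rw [Qpoly_eq, h, ← eq_rootMultiplicity_map (algebraMap ℝ ℂ).injective]
    have e : -(X * S) = C (-1) * X * S := by simp
    rw [← hSdef, e, rootMultiplicity_mul (by rwa [← e]),
      rootMultiplicity_eq_zero (by simpa [IsRoot] using hx), zero_add]
  have hiff : (∀ x : ℝ, x * P.eval x ^ 2 ≤ (rr g D.E).eval x) ↔ ∀ x, 0 ≤ S.eval x := by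
    simp [hSdef]
  rw [hiff]
  constructor
  · intro hA
    refine nonneg_of_even_rootMultiplicity S.natDegree S le_rfl hS0 fun x => ?_
    by_cases hroot : S.IsRoot x
    · have hx : x ≠ 0 := by
        rintro rfl
        exact hS0.ne' hroot
      rw [← hmult x hx]
      refine hA x hx ?_
      have hQ : Qpoly g D.E P ≠ 0 := by
        rw [Qpoly_eq]
        exact (Polynomial.map_ne_zero_iff (algebraMap ℝ ℂ).injective).2 hXS
      rw [← rootMultiplicity_pos hQ, hmult x hx]
      exact (rootMultiplicity_pos hS).2 hroot
    · rw [rootMultiplicity_eq_zero hroot]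
      exact Even.zero
  · intro h x hx _
    rw [hmult x hx]
    exact even_rootMultiplicity_of_nonneg hS h x

/-- `HasType` with the gaps numbered from `0` and `R` written as `λ r`. -/
lemma hasType_iff (D : BranchData g m) (P : ℝ[X]) (s : ℕ → ℝ) :
    HasType g m D.E P s ↔ ∀ k < m, ∀ x : ℝ, (D.E (2 * k + 2)).re ≤ x →
      x ≤ (D.E (2 * k + 1)).re →
      Real.sqrt (x * (rr g D.E).eval x) / (-x) ≤ s (k + 1) * P.eval x := by
  constructor
  · intro h k hk x h1 h2
    rw [← Rre_eq]
    exact h (k + 1) (by omega) (by omega) x h1 h2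
  · intro h k hk1 hk x h1 h2
    obtain ⟨k, rfl⟩ : ∃ l, k = l + 1 := ⟨k - 1, by omega⟩
    rw [Rre_eq]
    exact h k (by omega) x h1 h2

lemma gap_neg (D : BranchData g m) {k : ℕ} (hk : k < m) {x : ℝ}
    (h2 : x ≤ (D.E (2 * k + 1)).re) : x < 0 :=
  h2.trans_lt (D.hneg (2 * k + 1) (by omega) (by omega))

lemma sq_sign {s : ℕ → ℝ} (hs : SignVec m s) {k : ℕ} (hk : k < m) : s (k + 1) ^ 2 = 1 := by
  rcases hs (k + 1) (by omega) (by omega) with h | h <;> rw [h] <;> norm_num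

lemma hasType_of_nonneg (D : BranchData g m) {P : ℝ[X]} {s : ℕ → ℝ} (hs : SignVec m s)
    (hA : Admissible g D.E P)
    (h : ∀ k < m, ∀ x : ℝ, (D.E (2 * k + 2)).re ≤ x → x ≤ (D.E (2 * k + 1)).re →
      0 ≤ s (k + 1) * P.eval x) : HasType g m D.E P s := by
  rw [admissible_iff] at hA
  rw [hasType_iff]
  intro k hk x h1 h2
  have hx := gap_neg D hk h2
  have h3 := h k hk x h1 h2
  have h4 := hA x
  rw [div_le_iff₀ (by linarith), Real.sqrt_le_left (mul_nonneg h3 (by linarith)), mul_pow, mul_pow,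
    sq_sign hs hk]
  nlinarith

/-- The midpoint of the gap with zero-based index `k`. -/
def mid (E : ℕ → ℂ) (k : ℕ) : ℝ := ((E (2 * k + 2)).re + (E (2 * k + 1)).re) / 2

lemma mid_mem (D : BranchData g m) {k : ℕ} (hk : k < m) :
    (D.E (2 * k + 2)).re < mid D.E k ∧ mid D.E k < (D.E (2 * k + 1)).re := by
  have h3 := D.hdec (2 * k + 1) (by omega) (by omega)
  unfold mid
  constructor <;> linarith

lemma ne_zero_of_mem_gap (D : BranchData g m) {P : ℝ[X]} (hA : Admissible g D.E P) {k : ℕ}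
    (hk : k < m) {x : ℝ} (h1 : (D.E (2 * k + 2)).re < x) (h2 : x < (D.E (2 * k + 1)).re) :
    P.eval x ≠ 0 := by
  intro h
  have h3 := (admissible_iff D P).1 hA x
  have h4 := rr_neg_of_mem_gap D hk h1 h2
  rw [h] at h3
  linarith

/-- An admissible polynomial has no zero inside a gap, so its type is read off from its signs at
the midpoints. -/
lemma hasType_iff_mid (D : BranchData g m) {P : ℝ[X]} {s : ℕ → ℝ} (hs : SignVec m s)
    (hA : Admissible g D.E P) :
    HasType g m D.E P s ↔ ∀ k < m, 0 < s (k + 1) * P.eval (mid D.E k) := by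
  constructor
  · intro h k hk
    obtain ⟨h1, h2⟩ := mid_mem D hk
    refine lt_of_lt_of_le ?_ ((hasType_iff D P s).1 h k hk _ h1.le h2.le)
    have hx := gap_neg D hk h2.le
    have h4 := rr_neg_of_mem_gap D hk h1 h2
    exact div_pos (Real.sqrt_pos.2 (mul_pos_of_neg_of_neg hx h4)) (by linarith)
  · intro h
    refine hasType_of_nonneg D hs hA fun k hk x h1 h2 => ?_
    by_contra! hneg
    obtain ⟨h3, h4⟩ := mid_mem D hk
    have hpos := h k hk
    have hcont : Continuous fun t => s (k + 1) * P.eval t := continuous_const.mul P.continuous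
    obtain ⟨z, hz, hz0⟩ := intermediate_value_uIcc (a := x) (b := mid D.E k)
        hcont.continuousOn
        (show (0 : ℝ) ∈ _ from by
          rw [Set.mem_uIcc]; exact Or.inl ⟨hneg.le, hpos.le⟩)
    simp only at hz0
    have hzx : z ≠ x := by rintro rfl; linarith
    have hPz : P.eval z = 0 := by
      rcases mul_eq_zero.1 hz0 with h' | h'
      · rw [h'] at hpos; simp at hpos
      · exact h'
    refine ne_zero_of_mem_gap D hA hk ?_ ?_ hPz
    · rcases Set.mem_uIcc.1 hz with ⟨ha, hb⟩ | ⟨ha, hb⟩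
      · exact h1.trans_lt (lt_of_le_of_ne ha hzx.symm)
      · linarith
    · rcases Set.mem_uIcc.1 hz with ⟨ha, hb⟩ | ⟨ha, hb⟩
      · linarith
      · exact lt_of_lt_of_le (lt_of_le_of_ne hb hzx) h2

/-! ### Convexity -/

lemma eval_polyOf (c : Fin g → ℝ) (x : ℝ) : (polyOf g c).eval x = ∑ i, c i * x ^ (i : ℕ) := by
  simp [polyOf, eval_finsetSum]

lemma convex_type (D : BranchData g m) {s : ℕ → ℝ} (hs : SignVec m s) :
    Convex ℝ {c : Fin g → ℝ | Admissible g D.E (polyOf g c) ∧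
        HasType g m D.E (polyOf g c) s} := by
  rintro c ⟨hc, hcs⟩ d ⟨hd, hds⟩ a b ha hb hab
  have hlin : ∀ x, (polyOf g (a • c + b • d)).eval x
      = a * (polyOf g c).eval x + b * (polyOf g d).eval x := by
    intro x
    simp only [eval_polyOf, Finset.mul_sum, ← Finset.sum_add_distrib]
    refine Finset.sum_congr rfl fun i _ => ?_
    simp
    ring
  rw [admissible_iff] at hc hd
  rw [hasType_iff] at hcs hds
  have htype : HasType g m D.E (polyOf g (a • c + b • d)) s := by
    rw [hasType_iff]
    intro k hk x h1 h2
    have h3 := mul_le_mul_of_nonneg_left (hcs k hk x h1 h2) ha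
    have h4 := mul_le_mul_of_nonneg_left (hds k hk x h1 h2) hb
    rw [hlin]
    calc _ = a * (Real.sqrt (x * (rr g D.E).eval x) / (-x))
          + b * (Real.sqrt (x * (rr g D.E).eval x) / (-x)) := by rw [← add_mul, hab, one_mul]
      _ ≤ _ := add_le_add h3 h4
      _ = _ := by ring
  refine ⟨?_, htype⟩
  rw [admissible_iff]
  intro x
  have h1 := hc x
  have h2 := hd x
  rcases le_or_gt 0 x with hx | hx
  · -- for `x ≥ 0` the condition is a bound on the convex function `p ↦ x p²`
    rw [hlin]
    set p := (polyOf g c).eval x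
    set q := (polyOf g d).eval x
    have hb' : b = 1 - a := by linarith
    have h3 : (a * p + b * q) ^ 2 ≤ a * p ^ 2 + b * q ^ 2 := by
      subst hb'
      nlinarith [mul_nonneg (mul_nonneg ha hb) (sq_nonneg (p - q))]
    calc x * (a * p + b * q) ^ 2 ≤ x * (a * p ^ 2 + b * q ^ 2) := mul_le_mul_of_nonneg_left h3 hx
      _ = a * (x * p ^ 2) + b * (x * q ^ 2) := by ring
      _ ≤ a * (rr g D.E).eval x + b * (rr g D.E).eval x :=
        add_le_add (mul_le_mul_of_nonneg_left h1 ha) (mul_le_mul_of_nonneg_left h2 hb)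
      _ = _ := by rw [← add_mul, hab, one_mul]
  · rcases le_or_gt 0 ((rr g D.E).eval x) with hr | hr
    · exact (mul_nonpos_of_nonpos_of_nonneg hx.le (sq_nonneg _)).trans hr
    · -- negative values of `r` at `x < 0` occur only in gaps, where the type is a linear condition
      obtain ⟨k, hk, hk1, hk2⟩ := exists_gap_of_rr_neg D hr
      have h3 := (hasType_iff D _ s).1 htype k hk x hk1 hk2
      set P := (polyOf g (a • c + b • d)).eval x
      rw [div_le_iff₀ (by linarith)] at h3
      have h4 : x * (rr g D.E).eval x ≤ (s (k + 1) * P * -x) ^ 2 :=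
        Real.sqrt_le_iff.1 h3 |>.2
      rw [mul_pow, mul_pow, sq_sign hs hk] at h4
      have h5 : x * (rr g D.E).eval x ≤ x * (x * P ^ 2) := by nlinarith
      exact (mul_le_mul_left_of_neg hx).1 h5

/-! ### An explicit admissible polynomial of each type -/

/-- Products of quadratics in `z` in terms of `λ = -z²`: splitting a product into the parts even and
odd in `z` produces `A` and `P`, and multiplying it by its value at `-z` gives `A² + λ P²`. -/
lemma exists_even_odd (α β γ : ℕ → ℝ) (n : ℕ) : ∃ A P : ℝ[X],
    (∀ i, n + 1 ≤ i → A.coeff i = 0) ∧ (∀ i, n ≤ i → P.coeff i = 0) ∧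
    (∀ z : ℝ, A.eval (-z ^ 2) + z * P.eval (-z ^ 2)
      = ∏ j ∈ Finset.range n, (α j + β j * z + γ j * z ^ 2)) ∧
    A ^ 2 + X * P ^ 2 = ∏ j ∈ Finset.range n, ((C (α j) - C (γ j) * X) ^ 2 + X * C (β j) ^ 2) := by
  induction n with
  | zero =>
    refine ⟨1, 0, fun i hi => ?_, by simp, by simp, by simp⟩
    rw [coeff_one, if_neg (by omega)]
  | succ n ih =>
    obtain ⟨A, P, hA, hP, hz, hprod⟩ := ih
    have e : ∀ B : ℝ[X], B * (C (α n) - C (γ n) * X) = B * C (α n) - B * C (γ n) * X := by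
      intro B
      ring
    refine ⟨A * (C (α n) - C (γ n) * X) - X * (P * C (β n)),
      A * C (β n) + P * (C (α n) - C (γ n) * X), ?_, ?_, ?_, ?_⟩
    · intro i hi
      obtain ⟨l, rfl⟩ : ∃ l, i = l + 1 := ⟨i - 1, by omega⟩
      simp [e, coeff_mul_X, coeff_X_mul, hA l (by omega), hA (l + 1) (by omega), hP l (by omega)]
    · intro i hi
      obtain ⟨l, rfl⟩ : ∃ l, i = l + 1 := ⟨i - 1, by omega⟩
      simp [e, coeff_mul_X, hA (l + 1) (by omega), hP l (by omega), hP (l + 1) (by omega)]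
    · intro z
      rw [Finset.prod_range_succ, ← hz]
      simp
      ring
    · rw [Finset.prod_range_succ, ← hprod]
      ring

lemma exists_polyOf {P : ℝ[X]} (hP : ∀ i, g ≤ i → P.coeff i = 0) :
    ∃ c : Fin g → ℝ, polyOf g c = P := by
  refine ⟨fun i => P.coeff i, ?_⟩
  rw [polyOf, Fin.sum_univ_eq_sum_range (fun i => C (P.coeff i) * X ^ i) g]
  ext i
  simp only [finsetSum_coeff, coeff_C_mul, coeff_X_pow, mul_ite, mul_one, mul_zero,
    Finset.sum_ite_eq, Finset.mem_range]
  split_ifs with h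
  · rfl
  · exact (hP i (not_lt.1 h)).symm

/-- One quadratic factor `q(z) = α + β z + γ z²` with `q(z) q(-z)` equal to `qf E j` at `λ = -z²`.
For a real pair with `a = √(-E (2j+1))`, `a' = √(-E (2j+2))` it is `(a + ε z) (a' + z)`, and the
sign `ε` governs the signs of `q(z)` and `q(-z)` for `-z²` in or to the left of the gap. -/
lemma exists_factor (D : BranchData g m) (ε : ℕ → ℝ) (hε : ∀ j < m, ε j = 1 ∨ ε j = -1) (j : ℕ) :
    ∃ α β γ : ℝ, j < g →
      (C α - C γ * X) ^ 2 + X * C β ^ 2 = qf D.E j ∧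
      ∀ z : ℝ, 0 ≤ z →
        (j < m → -z ^ 2 ≤ (D.E (2 * j + 2)).re →
          0 ≤ ε j * (α + β * z + γ * z ^ 2) ∧ 0 ≤ ε j * (α + β * (-z) + γ * (-z) ^ 2)) ∧
        (j < m → (D.E (2 * j + 2)).re ≤ -z ^ 2 → -z ^ 2 ≤ (D.E (2 * j + 1)).re →
          0 ≤ ε j * (α + β * z + γ * z ^ 2) ∧ ε j * (α + β * (-z) + γ * (-z) ^ 2) ≤ 0) ∧
        ((j < m → (D.E (2 * j + 1)).re ≤ -z ^ 2) →
          0 ≤ α + β * z + γ * z ^ 2 ∧ 0 ≤ α + β * (-z) + γ * (-z) ^ 2) := by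
  by_cases hj : j < m
  · have hn1 := D.hneg (2 * j + 1) (by omega) (by omega)
    have hn2 := D.hneg (2 * j + 2) (by omega) (by omega)
    have hd : (D.E (2 * j + 2)).re < (D.E (2 * j + 1)).re :=
      D.hdec (2 * j + 1) (by omega) (by omega)
    set e := (D.E (2 * j + 1)).re with he
    set e' := (D.E (2 * j + 2)).re with he'
    have ha2 : Real.sqrt (-e) ^ 2 = -e := Real.sq_sqrt (by linarith)
    have ha2' : Real.sqrt (-e') ^ 2 = -e' := Real.sq_sqrt (by linarith)
    have haa : Real.sqrt (-e) ≤ Real.sqrt (-e') := Real.sqrt_le_sqrt (by linarith)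
    have ha0 := Real.sqrt_nonneg (-e)
    set a := Real.sqrt (-e)
    set a' := Real.sqrt (-e')
    have hcmp : ∀ {u v : ℝ}, 0 ≤ v → u ^ 2 ≤ v ^ 2 → u ≤ v := fun hv h =>
      (abs_le_of_sq_le_sq' h hv).2
    refine ⟨a * a', a + ε j * a', ε j, fun _ => ⟨?_, fun z hz => ⟨fun _ h => ?_, fun _ h h' => ?_,
      fun h => ?_⟩⟩⟩
    · have hε2 : ε j ^ 2 = 1 := by rcases hε j hj with h | h <;> rw [h] <;> norm_num
      refine Polynomial.funext fun x => ?_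
      rw [eval_qf_real D hj, ← he, ← he']
      simp only [eval_add, eval_sub, eval_mul, eval_pow, eval_C, eval_X]
      have h1 : e = -a ^ 2 := by linarith
      have h2 : e' = -a' ^ 2 := by linarith
      rw [h1, h2]
      linear_combination (x ^ 2 + x * a' ^ 2) * hε2
    · have hz' : a' ≤ z := hcmp hz (by linarith)
      have f1 : 0 ≤ z - a' := by linarith
      have f2 : 0 ≤ z - a := by linarith
      have f3 : 0 ≤ a + z := by linarith
      have f4 : 0 ≤ a' + z := by linarith
      rcases hε j hj with h | h <;> rw [h] <;>
        constructor <;> nlinarith [mul_nonneg f1 f2, mul_nonneg f1 f3, mul_nonneg f2 f4,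
          mul_nonneg f3 f4]
    · have hz' : z ≤ a' := hcmp (by linarith) (by linarith)
      have f1 : 0 ≤ a' - z := by linarith
      have f2 : 0 ≤ z - a := by linarith [hcmp hz (show a ^ 2 ≤ z ^ 2 by linarith)]
      have f3 : 0 ≤ a + z := by linarith
      have f4 : 0 ≤ a' + z := by linarith
      rcases hε j hj with h | h <;> rw [h] <;>
        constructor <;> nlinarith [mul_nonneg f1 f2, mul_nonneg f1 f3, mul_nonneg f2 f4,
          mul_nonneg f3 f4]
    · have hz' : z ≤ a := hcmp ha0 (by linarith [h hj])
      have f1 : 0 ≤ a' - z := by linarith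
      have f2 : 0 ≤ a - z := by linarith
      have f3 : 0 ≤ a + z := by linarith
      have f4 : 0 ≤ a' + z := by linarith
      rcases hε j hj with h | h <;> rw [h] <;>
        constructor <;> nlinarith [mul_nonneg f1 f2, mul_nonneg f1 f3, mul_nonneg f2 f4,
          mul_nonneg f3 f4]
  · -- for a complex pair, `√(-E)` and its conjugate are the roots of `|E| - β z + z²`
    set w := D.E (2 * j + 1) with hw
    have hre : 0 ≤ 2 * (‖w‖ - w.re) := by linarith [Complex.re_le_norm w]
    have hre' : 0 ≤ ‖w‖ + w.re := by linarith [(abs_le.1 (Complex.abs_re_le_norm w)).1]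
    have hβ : Real.sqrt (2 * (‖w‖ - w.re)) ^ 2 = 2 * (‖w‖ - w.re) := Real.sq_sqrt hre
    set β := Real.sqrt (2 * (‖w‖ - w.re))
    refine ⟨‖w‖, β, 1, fun hg => ⟨?_, fun z _ => ⟨fun h => absurd h hj, fun h => absurd h hj,
      fun _ => ?_⟩⟩⟩
    · refine Polynomial.funext fun x => ?_
      have hn : ‖w‖ ^ 2 = w.re ^ 2 + w.im ^ 2 := by
        rw [← Complex.normSq_eq_norm_sq, Complex.normSq_apply]
        ring
      simp [qf, E_conj D (not_lt.1 hj) hg, ← hw]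
      linear_combination hn + x * hβ
    · constructor
      · nlinarith [sq_nonneg (z + β / 2)]
      · nlinarith [sq_nonneg (z - β / 2)]

/-- With `F = ∏ q_j` real and `F(z) F(-z) = r(-z²)`, the polynomial `P(-z²) = (F(z) - F(-z)) / 2z`
satisfies `r - λ P² = A² ≥ 0`; taking `ε_j = s_j s_{j-1}` (in the one-based numbering of the gaps,
with `s_0 = 1`) gives `F(z)` the sign `s_k` and `F(-z)` the opposite sign on the `k`-th gap. -/
lemma nonempty_type (D : BranchData g m) {s : ℕ → ℝ} (hs : SignVec m s) :
    {c : Fin g → ℝ | Admissible g D.E (polyOf g c) ∧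
        HasType g m D.E (polyOf g c) s}.Nonempty := by
  have hmg := D.hmg
  set τ : ℕ → ℝ := fun k => if k = 0 then 1 else s k with hτ
  have hτ1 : ∀ k ≤ m, τ k = 1 ∨ τ k = -1 := by
    intro k hk
    by_cases h : k = 0
    · simp [hτ, h]
    · simpa [hτ, h] using hs k (by omega) hk
  set ε : ℕ → ℝ := fun j => τ (j + 1) * τ j with hε
  have hε1 : ∀ j < m, ε j = 1 ∨ ε j = -1 := by
    intro j hj
    rcases hτ1 j hj.le with h | h <;> rcases hτ1 (j + 1) hj with h' | h' <;> simp [hε, h, h']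
  have hprodε : ∀ n ≤ m, ∏ j ∈ Finset.range n, ε j = τ n := by
    intro n hn
    induction n with
    | zero => simp [hτ]
    | succ n ih =>
      rw [Finset.prod_range_succ, ih (by omega)]
      rcases hτ1 n (by omega) with h | h <;> simp [hε, h]
  choose α β γ hfac using exists_factor D ε hε1
  obtain ⟨A, P, -, hP, hz, hprod⟩ := exists_even_odd α β γ g
  have hr : A ^ 2 + X * P ^ 2 = rr g D.E := by
    rw [hprod, rr]
    exact Finset.prod_congr rfl fun j hj => (hfac j (Finset.mem_range.1 hj)).1
  obtain ⟨c, rfl⟩ := exists_polyOf hP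
  have hA : Admissible g D.E (polyOf g c) := by
    rw [admissible_iff]
    intro x
    rw [← hr]
    simp only [eval_add, eval_mul, eval_pow, eval_X]
    nlinarith [sq_nonneg (A.eval x)]
  refine ⟨c, hA, hasType_of_nonneg D hs hA fun k hk x h1 h2 => ?_⟩
  have hx := gap_neg D hk h2
  obtain ⟨z, hz0, rfl⟩ : ∃ z : ℝ, 0 < z ∧ x = -z ^ 2 :=
    ⟨Real.sqrt (-x), Real.sqrt_pos.2 (by linarith), by rw [Real.sq_sqrt (by linarith)]; ring⟩
  have hsign : ∀ y : ℝ, s (k + 1) * ∏ j ∈ Finset.range g, (α j + β j * y + γ j * y ^ 2)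
      = ∏ j ∈ Finset.range g,
        ((if j < k + 1 then ε j else 1) * (α j + β j * y + γ j * y ^ 2)) := by
    intro y
    rw [Finset.prod_mul_distrib, ← Finset.prod_filter]
    congr 1
    have e : (Finset.range g).filter (· < k + 1) = Finset.range (k + 1) := by
      ext j
      simp only [Finset.mem_filter, Finset.mem_range]
      omega
    rw [e, hprodε (k + 1) hk]
    simp [hτ]
  have hlow : ∀ j < k, -z ^ 2 ≤ (D.E (2 * j + 2)).re := fun j hj =>
    h2.trans (E_anti D (by omega) (by omega) (by omega)).le
  have hhigh : ∀ j, k < j → j < m → (D.E (2 * j + 1)).re ≤ -z ^ 2 := fun j hj hjm =>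
    (E_anti D (by omega) (by omega) (by omega)).le.trans h1
  have hk' : k ∈ Finset.range g := Finset.mem_range.2 (by omega)
  have hFk := (hfac k (by omega)).2 z hz0.le |>.2.1 hk h1 h2
  have hother : ∀ j ∈ (Finset.range g).erase k,
      0 ≤ (if j < k + 1 then ε j else 1) * (α j + β j * z + γ j * z ^ 2) ∧
      0 ≤ (if j < k + 1 then ε j else 1) * (α j + β j * (-z) + γ j * (-z) ^ 2) := by
    intro j hj
    rw [Finset.mem_erase, Finset.mem_range] at hj
    obtain ⟨p1, -, p3⟩ := (hfac j hj.2).2 z hz0.le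
    rcases lt_or_gt_of_ne hj.1 with h | h
    · rw [if_pos (by omega)]
      exact p1 (by omega) (hlow j h)
    · rw [if_neg (by omega), one_mul, one_mul]
      exact p3 (hhigh j h)
  have hF : 0 ≤ s (k + 1) * (A.eval (-z ^ 2) + z * (polyOf g c).eval (-z ^ 2)) := by
    rw [hz, hsign, ← Finset.mul_prod_erase _ _ hk', if_pos (by omega)]
    exact mul_nonneg hFk.1 (Finset.prod_nonneg fun j hj => (hother j hj).1)
  have hF' : s (k + 1) * (A.eval (-z ^ 2) + (-z) * (polyOf g c).eval (-z ^ 2)) ≤ 0 := by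
    have := hz (-z)
    rw [neg_sq] at this
    rw [this, ← neg_sq z, hsign, ← Finset.mul_prod_erase _ _ hk', if_pos (by omega)]
    exact mul_nonpos_of_nonpos_of_nonneg hFk.2 (Finset.prod_nonneg fun j hj => (hother j hj).2)
  refine nonneg_of_mul_nonneg_right (a := 2 * z) ?_ (by linarith)
  linarith

/-! ### Components -/

lemma joinedIn_iff (D : BranchData g m) (c d : Fin g → ℝ)
    (hc : Admissible g D.E (polyOf g c)) (hd : Admissible g D.E (polyOf g d)) :
    JoinedIn {c : Fin g → ℝ | Admissible g D.E (polyOf g c)} c d ↔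
        ∃ s : ℕ → ℝ, SignVec m s ∧
          HasType g m D.E (polyOf g c) s ∧ HasType g m D.E (polyOf g d) s := by
  constructor
  · rintro ⟨γ, hγ⟩
    set s : ℕ → ℝ := fun k => if 0 < (polyOf g c).eval (mid D.E (k - 1)) then 1 else -1 with hsdef
    have hs : SignVec m s := by
      intro k _ _
      simp only [hsdef]
      split_ifs <;> simp
    have hpos : ∀ k < m, 0 < s (k + 1) * (polyOf g c).eval (mid D.E k) := by
      intro k hk
      obtain ⟨h1, h2⟩ := mid_mem D hk
      have := ne_zero_of_mem_gap D hc hk h1 h2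
      simp only [hsdef, Nat.add_sub_cancel]
      split_ifs with h
      · simpa using h
      · have := lt_of_le_of_ne (not_lt.1 h) this
        linarith
    refine ⟨s, hs, (hasType_iff_mid D hs hc).2 hpos, (hasType_iff_mid D hs hd).2 fun k hk => ?_⟩
    -- along the path the value at a midpoint is continuous and nowhere zero
    by_contra! hle
    have hcont : Continuous fun t => s (k + 1) * (polyOf g (γ t)).eval (mid D.E k) := by
      simp only [eval_polyOf]
      fun_prop
    obtain ⟨t, ht⟩ := mem_range_of_exists_le_of_exists_ge hcont (c := 0) ⟨1, by simpa using hle⟩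
      ⟨0, by simpa using (hpos k hk).le⟩
    obtain ⟨h1, h2⟩ := mid_mem D hk
    have hsk : s (k + 1) ≠ 0 := by
      intro h
      have := sq_sign hs hk
      rw [h] at this
      norm_num at this
    exact ne_zero_of_mem_gap D (hγ t) hk h1 h2 ((mul_eq_zero.1 ht).resolve_left hsk)
  · rintro ⟨s, hs, h1, h2⟩
    refine JoinedIn.of_segment_subset fun x hx => ?_
    exact ((convex_type D hs).segment_subset ⟨hc, h1⟩ ⟨hd, h2⟩ hx).1

/-- The sign vector encoded by a Boolean vector (with value `1` outside `1, …, m`). -/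
def signOf (m : ℕ) (b : Fin m → Bool) (k : ℕ) : ℝ :=
  if h : k - 1 < m then (if b ⟨k - 1, h⟩ then 1 else -1) else 1

lemma signVec_signOf (b : Fin m → Bool) : SignVec m (signOf m b) := by
  intro k _ _
  unfold signOf
  split_ifs <;> simp

lemma hasType_congr (D : BranchData g m) {P : ℝ[X]} {s t : ℕ → ℝ}
    (h : ∀ k < m, s (k + 1) = t (k + 1)) : HasType g m D.E P s ↔ HasType g m D.E P t := by
  rw [hasType_iff, hasType_iff]
  refine forall₂_congr fun k hk => ?_
  rw [h k hk]

lemma ncard_types (D : BranchData g m) :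
    {T : Set (Fin g → ℝ) | ∃ s : ℕ → ℝ, SignVec m s ∧
      T = {c : Fin g → ℝ | Admissible g D.E (polyOf g c) ∧
        HasType g m D.E (polyOf g c) s}}.ncard = 2 ^ m := by
  set f : (Fin m → Bool) → Set (Fin g → ℝ) := fun b =>
    {c : Fin g → ℝ | Admissible g D.E (polyOf g c) ∧
        HasType g m D.E (polyOf g c) (signOf m b)} with hf
  have hrange : {T : Set (Fin g → ℝ) | ∃ s : ℕ → ℝ, SignVec m s ∧
      T = {c : Fin g → ℝ | Admissible g D.E (polyOf g c) ∧
        HasType g m D.E (polyOf g c) s}} = f '' Set.univ := by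
    ext T
    simp only [Set.mem_ofPred_eq, Set.image_univ, Set.mem_range]
    constructor
    · rintro ⟨s, hs, rfl⟩
      refine ⟨fun i => decide (s (i + 1) = 1), ?_⟩
      ext c
      simp only [hf, Set.mem_ofPred_eq]
      refine and_congr_right fun _ => hasType_congr D fun k hk => ?_
      rcases hs (k + 1) (by omega) (by omega) with h | h
      · simp [signOf, hk, h]
      · simp [signOf, hk, h]
        norm_num
    · rintro ⟨b, rfl⟩
      exact ⟨_, signVec_signOf b, rfl⟩
  have hinj : Function.Injective f := by
    intro b b' hbb
    obtain ⟨c, hc, hcb⟩ := nonempty_type D (signVec_signOf b)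
    have hc' : c ∈ f b' := hbb ▸ (show c ∈ f b from ⟨hc, hcb⟩)
    have h1 := (hasType_iff_mid D (signVec_signOf b) hc).1 hcb
    have h2 := (hasType_iff_mid D (signVec_signOf b') hc).1 hc'.2
    funext i
    have h3 := h1 i i.2
    have h4 := h2 i i.2
    simp only [signOf, Nat.add_sub_cancel, i.2, dite_true, Fin.eta] at h3 h4
    cases hb : b i <;> cases hb' : b' i <;> simp [hb, hb'] at h3 h4 <;> first | rfl | linarith
  rw [hrange, Set.ncard_image_of_injective _ hinj, Set.ncard_univ]
  simp

end

/-- The set of admissible polynomials (inside the space of real polynomials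
of degree at most `g-1`, identified with the coefficient space `Fin g → ℝ`) has exactly
`2^m` path-connected components, namely the `2^m` sets of admissible polynomials of a
fixed topological type `s ∈ {+1, -1}^m` — each of which is nonempty and convex: two
admissible polynomials are joined by a path inside the admissible set iff they have a
common topological type. -/
theorem statement9 (g m : ℕ) (D : BranchData g m) :
    (∀ s : ℕ → ℝ, SignVec m s →
      {c : Fin g → ℝ | Admissible g D.E (polyOf g c) ∧
        HasType g m D.E (polyOf g c) s}.Nonempty ∧
      Convex ℝ {c : Fin g → ℝ | Admissible g D.E (polyOf g c) ∧
        HasType g m D.E (polyOf g c) s}) ∧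
    (∀ c ∈ {c : Fin g → ℝ | Admissible g D.E (polyOf g c)},
     ∀ d ∈ {c : Fin g → ℝ | Admissible g D.E (polyOf g c)},
      (JoinedIn {c : Fin g → ℝ | Admissible g D.E (polyOf g c)} c d ↔
        ∃ s : ℕ → ℝ, SignVec m s ∧
          HasType g m D.E (polyOf g c) s ∧ HasType g m D.E (polyOf g d) s)) ∧
    {T : Set (Fin g → ℝ) | ∃ s : ℕ → ℝ, SignVec m s ∧
      T = {c : Fin g → ℝ | Admissible g D.E (polyOf g c) ∧
        HasType g m D.E (polyOf g c) s}}.ncard = 2 ^ m := by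
  exact ⟨fun s hs => ⟨nonempty_type D hs, convex_type D hs⟩,
    fun c hc d hd => joinedIn_iff D c d hc hd, ncard_types D⟩
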